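/- arXiv:1908.03022 — 2 statements merged into one kernel-verified Lean document; each statement's English description precedes it below -/
import Mathlib

section
/- Let G be a connected finite simple graph on vertex set V whose diameter is at most D (i.e., every two vertices are at distance at most D in G). Then for every finite set F of edges of G and every pair of vertices u, v that lie in the same connected component of the graph G − F obtained from G by deleting the edges in F, the distance between u and v in G − F is at most (|F| + 1)·(2D + 1). -/
/-- In a connected graph of diameter at most `D`, after deleting a finite set
`F` of edges, any two vertices that remain in the same connected component are at distance
at most `(|F| + 1) * (2D + 1)` in the resulting graph. -/
theorem stmt_0 {V : Type} [Fintype V] (G : SimpleGraph V) (D : ℕ)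
    (hconn : G.Connected) (hdiam : ∀ u v : V, G.dist u v ≤ D)
    (F : Finset (Sym2 V)) (hF : ↑F ⊆ G.edgeSet) (u v : V)
    (h : (G.deleteEdges ↑F).Reachable u v) :
    (G.deleteEdges ↑F).dist u v ≤ (F.card + 1) * (2 * D + 1) := by
  classical
  have hpar : ∀ x : V, ∃ p : V, x ≠ u → G.Adj p x ∧ G.dist u p + 1 = G.dist u x := by
    intro x
    by_cases hx : x = u
    · exact ⟨u, fun h => absurd hx h⟩
    · obtain ⟨w, hw⟩ := (hconn.preconnected x u).exists_walk_length_eq_dist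
      cases w with
      | nil => exact absurd rfl hx
      | @cons _ p _ hadj q =>
        refine ⟨p, fun _ => ⟨hadj.symm, ?_⟩⟩
        have h1 : G.dist p u ≤ q.length := SimpleGraph.dist_le q
        have h2 : G.dist x u ≤ G.dist x p + G.dist p u := hconn.dist_triangle
        have h3 : G.dist x p = 1 := SimpleGraph.dist_eq_one_iff_adj.mpr hadj
        rw [SimpleGraph.Walk.length_cons] at hw
        rw [SimpleGraph.dist_comm (u := u), SimpleGraph.dist_comm (u := u)]
        omega
  choose p hp using hpar
  let B : Finset V := Finset.univ.filter (fun x => x ≠ u ∧ s(p x, x) ∈ F)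
  have hB : B.card ≤ F.card := by
    apply Finset.card_le_card_of_injOn (fun x => s(p x, x))
    · intro x hx
      have hx' : x ∈ B := hx
      exact (Finset.mem_filter.mp hx').2.2
    · intro x hx y hy hxy
      have hx' : x ∈ B := hx
      have hy' : y ∈ B := hy
      have h1 := (hp x (Finset.mem_filter.mp hx').2.1).2
      have h2 := (hp y (Finset.mem_filter.mp hy').2.1).2
      rcases Sym2.eq_iff.mp hxy with ⟨_, h⟩ | ⟨h3, h4⟩
      · exact h
      · rw [h3] at h1
        rw [← h4] at h2
        omega
  have htop : ∀ n (x : V), G.dist u x = n → ∃ c ∈ insert u B,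
      ∃ w : (G.deleteEdges (F : Set (Sym2 V))).Walk x c, w.length ≤ n := by
    intro n
    induction n with
    | zero =>
      intro x hx
      have : u = x := hconn.dist_eq_zero_iff.mp hx
      subst this
      exact ⟨u, Finset.mem_insert_self _ _, .nil, le_rfl⟩
    | succ n ih =>
      intro x hx
      have hxu : x ≠ u := by
        rintro rfl
        simp at hx
      by_cases hxF : s(p x, x) ∈ F
      · exact ⟨x, Finset.mem_insert_of_mem (Finset.mem_filter.mpr
          ⟨Finset.mem_univ _, hxu, hxF⟩), .nil, by simp⟩
      · obtain ⟨ha, hd⟩ := hp x hxu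
        obtain ⟨c, hc, w, hw⟩ := ih (p x) (by omega)
        have hadj : (G.deleteEdges (F : Set (Sym2 V))).Adj x (p x) := by
          rw [SimpleGraph.deleteEdges_adj]
          refine ⟨ha.symm, ?_⟩
          rw [Sym2.eq_swap]
          exact_mod_cast hxF
        exact ⟨c, hc, .cons hadj w, by simpa using hw⟩
  have htop' : ∀ x : V, ∃ c ∈ insert u B,
      ∃ w : (G.deleteEdges (F : Set (Sym2 V))).Walk x c, w.length ≤ D := by
    intro x
    obtain ⟨c, hc, w, hw⟩ := htop _ x rfl
    exact ⟨c, hc, w, hw.trans (hdiam u x)⟩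
  choose t htB tw htw using htop'
  obtain ⟨w, hw⟩ := h.exists_walk_length_eq_dist
  have key : ∀ i j, i ≤ j → j ≤ w.length → t (w.getVert i) = t (w.getVert j) →
      j ≤ i + 2 * D := by
    intro i j hij hj ht
    have h1 := SimpleGraph.dist_le ((w.take i).append (((tw (w.getVert i)).append
      (((tw (w.getVert j)).copy rfl ht.symm).reverse)).append (w.drop j)))
    simp only [SimpleGraph.Walk.length_append, SimpleGraph.Walk.length_reverse,
      SimpleGraph.Walk.length_copy, SimpleGraph.Walk.take_length,
      SimpleGraph.Walk.drop_length] at h1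
    have h2 := htw (w.getVert i)
    have h3 := htw (w.getVert j)
    have h4 : min i w.length ≤ i := min_le_left _ _
    omega
  have hcard := Finset.card_le_mul_card_image_of_maps_to
    (s := Finset.range (w.length + 1)) (t := insert u B) (f := fun i => t (w.getVert i))
    (fun i _ => htB _) (2 * D + 1) (by
      intro c hc
      rcases Finset.eq_empty_or_nonempty
        ((Finset.range (w.length + 1)).filter (fun i => t (w.getVert i) = c)) with he | hne
      · rw [he]; simp
      · have hm := Finset.min'_mem _ hne
        set m := Finset.min' _ hne with hmdef
        have hsub : (Finset.range (w.length + 1)).filter (fun i => t (w.getVert i) = c) ⊆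
            Finset.Icc m (m + 2 * D) := by
          intro j hj
          have hmj : m ≤ j := Finset.min'_le _ _ hj
          simp only [Finset.mem_filter, Finset.mem_range] at hj hm
          rw [Finset.mem_Icc]
          exact ⟨hmj, key m j hmj (by omega) (hm.2.trans hj.2.symm)⟩
        refine (Finset.card_le_card hsub).trans ?_
        rw [Nat.card_Icc]
        omega)
  rw [Finset.card_range] at hcard
  have h5 : (insert u B).card ≤ F.card + 1 := (Finset.card_insert_le _ _).trans (by omega)
  have h6 := Nat.mul_le_mul_left (2 * D + 1) h5
  rw [← hw, mul_comm]
  omega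
end

section
/- Let G be a connected finite simple graph with diameter at most D, let E′ be a finite set of edges of G, and fix a vertex s. Then the graph G − E′ obtained by deleting the edges of E′ is connected if and only if every vertex v of G satisfies dist_{G − E′}(s, v) ≤ (|E′| + 1)·(2D + 1); in particular, if G − E′ is connected then every vertex is reachable from s in G − E′ within (|E′| + 1)·(2D + 1) steps. -/
/-- For a connected graph `G` of diameter at most `D`, a finite edge set `E'`
and a fixed vertex `s`, the graph `G − E'` is connected iff every vertex `v` is reachable
from `s` in `G − E'` at distance at most `(|E'| + 1) * (2D + 1)`. -/
theorem stmt_2 {V : Type} [Fintype V] (G : SimpleGraph V) (D : ℕ)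
    (hconn : G.Connected) (hdiam : ∀ u v : V, G.dist u v ≤ D)
    (E' : Finset (Sym2 V)) (hE' : ↑E' ⊆ G.edgeSet) (s : V) :
    (G.deleteEdges ↑E').Connected ↔
      ∀ v : V, (G.deleteEdges ↑E').Reachable s v ∧
        (G.deleteEdges ↑E').dist s v ≤ (E'.card + 1) * (2 * D + 1) := by
  classical
  constructor
  swap
  · intro h
    haveI : Nonempty V := ⟨s⟩
    exact SimpleGraph.Connected.mk fun u v => (h u).1.symm.trans (h v).1
  intro hH v
  refine ⟨hH s v, ?_⟩
  set H := G.deleteEdges (↑E' : Set (Sym2 V)) with hHdef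
  -- a parent function for a breadth-first tree
  have hpar : ∀ u : V, ∃ p : V, u ≠ s → G.Adj u p ∧ G.dist p s < G.dist u s := by
    intro u
    by_cases hu : u = s
    · exact ⟨u, fun h => absurd hu h⟩
    obtain ⟨w, hw⟩ := hconn.exists_walk_length_eq_dist u s
    cases w with
    | nil => exact absurd rfl hu
    | cons hadj q =>
      rename_i p
      refine ⟨p, fun _ => ⟨hadj, ?_⟩⟩
      have := SimpleGraph.dist_le q
      rw [SimpleGraph.Walk.length_cons] at hw
      omega
  choose par hpar using hpar
  let R : Finset V := Finset.univ.filter fun u => u ≠ s ∧ s(u, par u) ∈ E'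
  have hR : R.card ≤ E'.card := by
    apply Finset.card_le_card_of_injOn (fun u => s(u, par u))
    · intro u hu
      have hu' : u ∈ R := hu
      exact (Finset.mem_filter.mp hu').2.2
    · intro a ha b hb hab
      have ha' : a ∈ R := ha
      have hb' : b ∈ R := hb
      have h1 := (hpar a (Finset.mem_filter.mp ha').2.1).2
      have h2 := (hpar b (Finset.mem_filter.mp hb').2.1).2
      rcases Sym2.eq_iff.mp hab with ⟨h, _⟩ | ⟨h, h'⟩
      · exact h
      · rw [h'] at h1
        rw [← h] at h2
        omega
  have hroot : ∀ n : ℕ, ∀ u : V, G.dist u s ≤ n → ∃ r ∈ insert s R, H.dist u r ≤ n := by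
    intro n
    induction n with
    | zero =>
      intro u hu
      have : u = s := hconn.dist_eq_zero_iff.mp (Nat.le_zero.mp hu)
      exact ⟨s, Finset.mem_insert_self _ _, by simp [this]⟩
    | succ n ih =>
      intro u hu
      by_cases hus : u = s
      · exact ⟨s, Finset.mem_insert_self _ _, by simp [hus]⟩
      by_cases hE : s(u, par u) ∈ E'
      · refine ⟨u, Finset.mem_insert_of_mem ?_, by simp⟩
        exact Finset.mem_filter.mpr ⟨Finset.mem_univ _, hus, hE⟩
      · obtain ⟨hadj, hlt⟩ := hpar u hus
        obtain ⟨r, hr, hd⟩ := ih (par u) (by omega)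
        refine ⟨r, hr, ?_⟩
        have hadj' : H.Adj u (par u) := by
          rw [hHdef, SimpleGraph.deleteEdges_adj]
          exact ⟨hadj, by simpa using hE⟩
        have h1 : H.dist u (par u) = 1 := SimpleGraph.dist_eq_one_iff_adj.mpr hadj'
        have h2 := hH.dist_triangle (u := u) (v := par u) (w := r)
        omega
  obtain ⟨w, hw⟩ := hH.exists_walk_length_eq_dist s v
  have hsub : Finset.range (H.dist s v + 1) ⊆
      (insert s R).biUnion fun r => Finset.Icc (H.dist s r - D) (H.dist s r + D) := by
    intro i hi
    rw [Finset.mem_range] at hi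
    have h1 := SimpleGraph.dist_le (w.take i)
    have h2 := SimpleGraph.dist_le (w.drop i)
    have h3 := hH.dist_triangle (u := s) (v := w.getVert i) (w := v)
    rw [SimpleGraph.Walk.take_length] at h1
    rw [SimpleGraph.Walk.drop_length] at h2
    obtain ⟨r, hr, hd⟩ := hroot D (w.getVert i) (hdiam _ _)
    have h4 := hH.dist_triangle (u := s) (v := w.getVert i) (w := r)
    have h5 := hH.dist_triangle (u := s) (v := r) (w := w.getVert i)
    rw [SimpleGraph.dist_comm (u := r)] at h5
    refine Finset.mem_biUnion.mpr ⟨r, hr, Finset.mem_Icc.mpr ?_⟩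
    omega
  have hc := (Finset.card_le_card hsub).trans
    (Finset.card_biUnion_le_card_mul _ _ (2 * D + 1) (by
      intro r _
      rw [Nat.card_Icc]
      omega))
  rw [Finset.card_range] at hc
  have hi : (insert s R).card ≤ E'.card + 1 := (Finset.card_insert_le _ _).trans (by omega)
  have := Nat.mul_le_mul_right (2 * D + 1) hi
  omega
end
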